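/- Let 𝒦 = {K_n : n ∈ ω} be a countably infinite set of nonempty compact subsets of (0,1), no two of which are order isomorphic. Then there exists a 𝒦-fan X, with witnessing set E_𝒦 = {e_n : n ∈ ω}, such that E(X) is homeomorphic to the natural numbers (a countably infinite discrete space) and E(X) = E_𝒦. -/

import Mathlib

/-!
The fan is a union of legs indexed by `ℕ`, organised as a tree: removing the top binary digit of
`n > 0` gives the parent of `n`, so each `n` has infinitely many children `n + 2 ^ j`. Reading
binary digits as ternary digits `0, 2` assigns to `n` a point `address n` of the Cantor set, and
the addresses of the children of `n` converge to `address n`.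

First each `K n` is replaced by an order isomorphic copy `L n ⊆ (0, 1 / (n + 2)]`
(`exists_squeezed`), and a sequence `s n` with closure `L n` is chosen. The height of the child
`n + 2 ^ j` is the height of `n` times some `s n i`, each `i` being used for infinitely many `j`.
Hence the tips of the children of `n` accumulate on the leg of `n` at all points whose relative
height lies in `L n`.

The squeezing guarantees that nothing else happens. A leg of height at least `ε`, other than the
root leg, has a parent less than `1 / ε`, so a sequence of points at height at least `ε` on
legs with distinct indices has, up to a subsequence, all its legs among the children of
one fixed `n` (`limit_cases`, phrased
with ultrafilters). This shows at once that the union is closed, that near the tip of a leg the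
fan consists of that leg only (so that tips are endpoints and form a discrete set), and that the
closure of the set of tips meets the open leg of `n` exactly in the copy of `L n`.
All remaining points of the fan have order at least `2`, so the tips are all the endpoints.
-/

open Set Topology

noncomputable section

namespace SmoothFanPaper

/-- `A` is an arc (a homeomorphic copy of `[0,1]`) with endpoints `a` and `b`. -/
def IsArc {α : Type*} [TopologicalSpace α] (A : Set α) (a b : α) : Prop :=
  ∃ h : (Set.Icc (0:ℝ) 1) ≃ₜ A,
    (h ⟨0, Set.left_mem_Icc.mpr zero_le_one⟩ : α) = a ∧
    (h ⟨1, Set.right_mem_Icc.mpr zero_le_one⟩ : α) = b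

/-- The order of `x` in `X` is at least `n`: there are `n` arcs contained in `X`, each with
`x` as an endpoint, which pairwise meet only in `x`. -/
def OrderAtLeast {α : Type*} [TopologicalSpace α] (X : Set α) (x : α) (n : ℕ) : Prop :=
  ∃ A : Fin n → Set α, (∀ i, A i ⊆ X) ∧ (∀ i, ∃ b, IsArc (A i) x b) ∧
    ∀ i j, i ≠ j → A i ∩ A j = {x}

/-- The set of endpoints of `X`: points of order exactly `1`. -/
def Endpoints {α : Type*} [TopologicalSpace α] (X : Set α) : Set α :=
  {x | x ∈ X ∧ OrderAtLeast X x 1 ∧ ¬ OrderAtLeast X x 2}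

/-- The Cantor fan: the union of all straight-line segments from the origin to the points of
`cantorSet × {1}` in the plane. -/
def CantorFan : Set (ℝ × ℝ) :=
  {q | ∃ c ∈ cantorSet, ∃ t ∈ Set.Icc (0:ℝ) 1, q = (t * c, t)}

/-- The cone point of the Cantor fan. -/
def fanVertex : ℝ × ℝ := (0, 0)

/-- A smooth fan: a non-degenerate subcontinuum of the Cantor fan containing the cone point,
whose cone point (the vertex) has order at least 2.  (Every statement below about smooth fans
is invariant under homeomorphisms, so we may realize all smooth fans concretely as such
subcontinua.) -/
structure IsSmoothFan (X : Set (ℝ × ℝ)) : Prop where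
  subset_fan : X ⊆ CantorFan
  isCompact : IsCompact X
  isConnected : IsConnected X
  nondegenerate : ∃ x ∈ X, ∃ y ∈ X, x ≠ y
  vertex_mem : fanVertex ∈ X
  vertex_order : OrderAtLeast X fanVertex 2

/-- Two subsets of `(0,1)` are order isomorphic if some order preserving self-homeomorphism
of `[0,1]` maps one onto the other. -/
def OrderIsomorphic (A B : Set ℝ) : Prop :=
  ∃ h : (Set.Icc (0:ℝ) 1) ≃ₜ (Set.Icc (0:ℝ) 1), StrictMono h ∧
    Subtype.val '' (⇑h '' (Subtype.val ⁻¹' A)) = B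

/-- The canonical parametrization of (subsets of) the leg of the Cantor fan through `e`:
a point of the leg is sent to its height, rescaled so that `e` is at height `1`. -/
def legParam (e : ℝ × ℝ) (S : Set (ℝ × ℝ)) : Set ℝ :=
  (fun q : ℝ × ℝ => q.2 / e.2) '' S

/-- The trace of the closure of a set `T` on the open leg `pe ∖ {p, e}` (where `p` is the
vertex and `pe = segment ℝ p e` is the unique arc in a smooth fan from `p` to an endpoint
`e`), viewed as a subset of `(0,1)` via the canonical parametrization of the leg. -/
def legTrace (T : Set (ℝ × ℝ)) (e : ℝ × ℝ) : Set ℝ :=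
  legParam e ((closure T ∩ segment ℝ fanVertex e) \ {fanVertex, e})

/-- `K` enumerates a countably infinite set `𝒦` of compact subsets of `(0,1)`, no two of
which are order isomorphic. -/
def KFamily (K : ℕ → Set ℝ) : Prop :=
  (∀ n, IsCompact (K n) ∧ K n ⊆ Set.Ioo (0:ℝ) 1) ∧
    ∀ m n, m ≠ n → ¬ OrderIsomorphic (K m) (K n)

/-- `X` is a `𝒦`-fan with witnessing endpoint set `E_𝒦 = {e n : n ∈ ℕ}`. -/
structure IsKFan (K : ℕ → Set ℝ) (X : Set (ℝ × ℝ)) (e : ℕ → ℝ × ℝ) : Prop where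
  fan : IsSmoothFan X
  mem_endpoints : ∀ n, e n ∈ Endpoints X
  trace_iso : ∀ n, OrderIsomorphic (legTrace (Endpoints X) (e n)) (K n)
  trace_not_iso : ∀ x ∈ Endpoints X \ Set.range e, ∀ n,
    ¬ OrderIsomorphic (legTrace (Endpoints X) x) (K n)
  meets_closure : ∀ x ∈ Endpoints X \ Set.range e,
    ((closure (Set.range e) ∩ segment ℝ fanVertex x) \ {fanVertex}).Nonempty

/-- A smooth fan is endpoint rigid if every self-homeomorphism fixes every endpoint. -/
def EndpointRigid (X : Set (ℝ × ℝ)) : Prop :=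
  ∀ h : X ≃ₜ X, ∀ x : X, (x : ℝ × ℝ) ∈ Endpoints X → ((h x : X) : ℝ × ℝ) = (x : ℝ × ℝ)

/-- Complete Erdős space `𝔈_c`: the points of the Hilbert space `ℓ²` all of whose
coordinates lie in `{0} ∪ {1/m : m ≥ 1}`. -/
def ErdosSpace : Set (lp (fun _ : ℕ => ℝ) 2) :=
  {x | ∀ n : ℕ, x n = 0 ∨ ∃ m : ℕ, 0 < m ∧ x n = 1 / m}

/-- `z` is a point of zero-dimensionality of the space it lives in: it has a neighborhood
basis of clopen subsets. -/
def ZeroDimPointAt {α : Type*} [TopologicalSpace α] (z : α) : Prop :=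
  ∀ U ∈ nhds z, ∃ V : Set α, IsClopen V ∧ z ∈ V ∧ V ⊆ U
/-- `L₀^φ = {(x,y) : x ∈ C, 0 ≤ y ≤ φ(x)}`, over the Cantor set. -/
def L0 (φ : ℝ → ℝ) : Set (ℝ × ℝ) :=
  {q | q.1 ∈ cantorSet ∧ 0 ≤ q.2 ∧ q.2 ≤ φ q.1}

/-- `G₀^φ = {(x,φ(x)) : x ∈ C, φ(x) > 0}`, over the Cantor set. -/
def G0 (φ : ℝ → ℝ) : Set (ℝ × ℝ) :=
  {q | q.1 ∈ cantorSet ∧ 0 < q.2 ∧ q.2 = φ q.1}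

/-- The setoid on `L₀^φ` identifying the set `C × {0}` to a point. -/
def L0Setoid (φ : ℝ → ℝ) : Setoid (L0 φ) where
  r a b := a = b ∨ ((a : ℝ × ℝ).2 = 0 ∧ (b : ℝ × ℝ).2 = 0)
  iseqv := by
    constructor
    · exact fun _ => Or.inl rfl
    · rintro a b (rfl | ⟨h1, h2⟩)
      · exact Or.inl rfl
      · exact Or.inr ⟨h2, h1⟩
    · rintro a b c (rfl | ⟨h1, h2⟩) (rfl | ⟨h3, h4⟩)
      · exact Or.inl rfl
      · exact Or.inr ⟨h3, h4⟩
      · exact Or.inr ⟨h1, h2⟩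
      · exact Or.inr ⟨h1, h4⟩

/-- The quotient space `L₀^φ / (C × {0})`. -/
def L0Quot (φ : ℝ → ℝ) : Type := Quotient (L0Setoid φ)

instance (φ : ℝ → ℝ) : TopologicalSpace (L0Quot φ) :=
  inferInstanceAs (TopologicalSpace (Quotient (L0Setoid φ)))

/-- The quotient projection `L₀^φ → L₀^φ / (C × {0})`. -/
def L0Proj (φ : ℝ → ℝ) : L0 φ → L0Quot φ := Quotient.mk (L0Setoid φ)

/-- The setoid on `E × [0,1]` identifying `E × {0}` to a point. -/
def coneSetoid (E : Type*) : Setoid (E × Set.Icc (0:ℝ) 1) where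
  r a b := a = b ∨ ((a.2 : ℝ) = 0 ∧ (b.2 : ℝ) = 0)
  iseqv := by
    constructor
    · exact fun _ => Or.inl rfl
    · rintro a b (rfl | ⟨h1, h2⟩)
      · exact Or.inl rfl
      · exact Or.inr ⟨h2, h1⟩
    · rintro a b c (rfl | ⟨h1, h2⟩) (rfl | ⟨h3, h4⟩)
      · exact Or.inl rfl
      · exact Or.inr ⟨h3, h4⟩
      · exact Or.inr ⟨h1, h2⟩
      · exact Or.inr ⟨h1, h4⟩

/-- The cone over a space `E`: the quotient `(E × [0,1]) / (E × {0})`. -/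
def Cone (E : Type*) [TopologicalSpace E] : Type _ := Quotient (coneSetoid E)

instance (E : Type*) [TopologicalSpace E] : TopologicalSpace (Cone E) :=
  inferInstanceAs (TopologicalSpace (Quotient (coneSetoid E)))

/-- A point of the one-point compactification of the disjoint union of the fans `X i`
is to be glued iff it is `∞` or the vertex of one of the fans. -/
def isGluedPoint {ι : Type*} (X : ι → Set (ℝ × ℝ)) :
    OnePoint (Σ i : ι, X i) → Prop :=
  fun a => a.elim True (fun q => (q.2 : ℝ × ℝ) = fanVertex)

/-- The setoid gluing the vertices (and the point at infinity) of the fans `X i`. -/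
def fanSumSetoid {ι : Type*} (X : ι → Set (ℝ × ℝ)) :
    Setoid (OnePoint (Σ i : ι, X i)) where
  r a b := a = b ∨ (isGluedPoint X a ∧ isGluedPoint X b)
  iseqv := by
    constructor
    · exact fun _ => Or.inl rfl
    · rintro a b (rfl | ⟨h1, h2⟩)
      · exact Or.inl rfl
      · exact Or.inr ⟨h2, h1⟩
    · rintro a b c (rfl | ⟨h1, h2⟩) (rfl | ⟨h3, h4⟩)
      · exact Or.inl rfl
      · exact Or.inr ⟨h3, h4⟩
      · exact Or.inr ⟨h1, h2⟩
      · exact Or.inr ⟨h1, h4⟩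

/-- The sum `Σᵢ Xᵢ` of a (finite or countably infinite) family of smooth fans: the quotient of
the one-point compactification of their disjoint union identifying the set consisting of all
the vertices and the point at infinity to a single point.  (For a finite family, `∞` is an
isolated point which is absorbed by the vertex class, so this agrees with the quotient of the
plain disjoint union identifying the vertices.) -/
def FanSum {ι : Type*} (X : ι → Set (ℝ × ℝ)) : Type _ := Quotient (fanSumSetoid X)

instance {ι : Type*} (X : ι → Set (ℝ × ℝ)) : TopologicalSpace (FanSum X) :=
  inferInstanceAs (TopologicalSpace (Quotient (fanSumSetoid X)))

/-! ### A tree of addresses in the Cantor set -/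

/-- The Cantor set point whose ternary digits are twice the binary digits of `n`, the least
significant binary digit of `n` giving the first ternary digit. -/
def address (n : ℕ) : ℝ :=
  if n = 0 then 0
  else if n % 2 = 0 then address (n / 2) / 3 else (2 + address (n / 2)) / 3
termination_by n
decreasing_by all_goals omega

lemma address_zero : address 0 = 0 := by rw [address]; simp

lemma address_two_mul (n : ℕ) : address (2 * n) = address n / 3 := by
  rcases Nat.eq_zero_or_pos n with rfl | h
  · simp [address_zero]
  · rw [address, if_neg (by omega), if_pos (by omega)]
    congr 2
    omega

lemma address_two_mul_add_one (n : ℕ) : address (2 * n + 1) = (2 + address n) / 3 := by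
  rw [address, if_neg (by omega), if_neg (by omega)]
  congr 3
  omega

lemma address_mem (n : ℕ) : address n ∈ cantorSet := by
  induction n using Nat.strong_induction_on with
  | _ n ih =>
    rcases Nat.eq_zero_or_pos n with rfl | hn
    · rw [address_zero]; exact zero_mem_cantorSet
    · have h := ih (n / 2) (by omega)
      rw [cantorSet_eq_union_halves]
      rcases Nat.mod_two_eq_zero_or_one n with h0 | h0
      · left
        refine ⟨_, h, ?_⟩
        change address (n / 2) / 3 = _
        rw [← address_two_mul]
        congr 1; omega
      · right
        refine ⟨_, h, ?_⟩
        change (2 + address (n / 2)) / 3 = _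
        rw [← address_two_mul_add_one]
        congr 1; omega

lemma address_nonneg (n : ℕ) : 0 ≤ address n := (cantorSet_subset_unitInterval (address_mem n)).1

lemma address_le_one (n : ℕ) : address n ≤ 1 := (cantorSet_subset_unitInterval (address_mem n)).2

lemma address_injective : Function.Injective address := by
  intro a
  induction a using Nat.strong_induction_on with
  | _ a ih =>
    intro b hab
    have ha := address_nonneg (a / 2)
    have ha' := address_le_one (a / 2)
    have hb := address_nonneg (b / 2)
    have hb' := address_le_one (b / 2)
    rcases Nat.eq_zero_or_pos a with rfl | hpos
    · -- the first nonzero digit of `b` makes its address positive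
      by_contra hne
      have key : ∀ n, 0 < n → 0 < address n := by
        intro n
        induction n using Nat.strong_induction_on with
        | _ n ihn =>
          intro hn
          have h0 := address_nonneg (n / 2)
          rw [address, if_neg (by omega)]
          split_ifs with h
          · have := ihn (n / 2) (by omega) (by omega)
            positivity
          · positivity
      have := key b (by omega)
      rw [← hab, address_zero] at this
      exact lt_irrefl _ this
    · rcases Nat.mod_two_eq_zero_or_one a with h1 | h1 <;>
        rcases Nat.mod_two_eq_zero_or_one b with h2 | h2
      · have e1 : a = 2 * (a / 2) := by omega
        have e2 : b = 2 * (b / 2) := by omega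
        rw [e1, e2, address_two_mul, address_two_mul] at hab
        have := ih (a / 2) (by omega) (show address (a / 2) = address (b / 2) by linarith)
        omega
      · have e1 : a = 2 * (a / 2) := by omega
        have e2 : b = 2 * (b / 2) + 1 := by omega
        rw [e1, e2, address_two_mul, address_two_mul_add_one] at hab
        linarith
      · have e1 : a = 2 * (a / 2) + 1 := by omega
        have e2 : b = 2 * (b / 2) := by omega
        rw [e1, e2, address_two_mul, address_two_mul_add_one] at hab
        linarith
      · have e1 : a = 2 * (a / 2) + 1 := by omega
        have e2 : b = 2 * (b / 2) + 1 := by omega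
        rw [e1, e2, address_two_mul_add_one, address_two_mul_add_one] at hab
        have := ih (a / 2) (by omega) (show address (a / 2) = address (b / 2) by linarith)
        omega

/-- Numbers that agree in their lowest `j` binary digits have addresses at distance at
most `3⁻ʲ`. -/
lemma abs_address_sub_le (j n k : ℕ) (hn : n < 2 ^ j) :
    |address (n + 2 ^ j * k) - address n| ≤ (1 / 3 : ℝ) ^ j := by
  induction j generalizing n with
  | zero =>
    have : n = 0 := by simpa using hn
    subst this
    have h1 := address_nonneg k
    have h2 := address_le_one k
    simp only [address_zero, pow_zero, one_mul, zero_add, sub_zero]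
    rwa [abs_of_nonneg h1]
  | succ j ih =>
    have hlt : n / 2 < 2 ^ j := by rw [pow_succ] at hn; omega
    have h := ih (n / 2) hlt
    rw [abs_le] at h ⊢
    rw [pow_succ (1 / 3 : ℝ)]
    rcases Nat.mod_two_eq_zero_or_one n with h1 | h1
    · have e1 : n + 2 ^ (j + 1) * k = 2 * (n / 2 + 2 ^ j * k) := by
        have : n = 2 * (n / 2) := by omega
        rw [pow_succ]; linarith
      have e2 : address n = address (n / 2) / 3 := by
        rw [← address_two_mul]; congr 1; omega
      rw [e1, e2, address_two_mul]
      constructor <;> linarith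
    · have e1 : n + 2 ^ (j + 1) * k = 2 * (n / 2 + 2 ^ j * k) + 1 := by
        have : n = 2 * (n / 2) + 1 := by omega
        rw [pow_succ]; linarith
      have e2 : address n = (2 + address (n / 2)) / 3 := by
        rw [← address_two_mul_add_one]; congr 1; omega
      rw [e1, e2, address_two_mul_add_one]
      constructor <;> linarith

/-- The parent of `n > 0` in the tree on `ℕ` rooted at `0`: the top binary digit of `n` is
removed. The children of `n` are the numbers `n + 2 ^ j` with `n < 2 ^ j`. -/
def parent (n : ℕ) : ℕ := n - 2 ^ Nat.log 2 n

lemma parent_lt {n : ℕ} (hn : n ≠ 0) : parent n < n := by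
  have := Nat.pow_pos (n := Nat.log 2 n) (show 0 < 2 by norm_num)
  unfold parent
  omega

lemma log_child {n j : ℕ} (h : n < 2 ^ j) : Nat.log 2 (n + 2 ^ j) = j := by
  rw [Nat.log_eq_iff (Or.inr ⟨by norm_num, by have := Nat.pow_pos (n := j) (show 0 < 2 by norm_num); omega⟩)]
  rw [pow_succ]
  omega

lemma parent_child {n j : ℕ} (h : n < 2 ^ j) : parent (n + 2 ^ j) = n := by
  rw [parent, log_child h]; omega

lemma abs_address_sub_parent_le {m : ℕ} (hm : m ≠ 0) :
    |address m - address (parent m)| ≤ (1 / 3 : ℝ) ^ Nat.log 2 m := by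
  have h1 := Nat.pow_log_le_self 2 hm
  have h2 := Nat.lt_pow_succ_log_self (b := 2) (by norm_num) m
  have h3 : parent m < 2 ^ Nat.log 2 m := by
    rw [pow_succ] at h2
    unfold parent
    omega
  have h := abs_address_sub_le (Nat.log 2 m) (parent m) 1 h3
  have e : parent m + 2 ^ Nat.log 2 m * 1 = m := by unfold parent; omega
  rwa [e] at h

open Filter in
lemma tendsto_log_two : Tendsto (fun m => Nat.log 2 m) atTop atTop := by
  refine tendsto_atTop.2 fun b => ?_
  filter_upwards [eventually_ge_atTop (2 ^ b)] with m hm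
  exact Nat.le_log_of_pow_le (by norm_num) hm

open Filter in
lemma tendsto_address_sub_parent :
    Tendsto (fun m => address m - address (parent m)) atTop (𝓝 0) := by
  rw [tendsto_zero_iff_abs_tendsto_zero]
  have h : Tendsto (fun m => (1 / 3 : ℝ) ^ Nat.log 2 m) atTop (𝓝 0) :=
    (tendsto_pow_atTop_nhds_zero_of_lt_one (by norm_num) (by norm_num)).comp tendsto_log_two
  refine squeeze_zero' (Eventually.of_forall fun m => abs_nonneg _) ?_ h
  filter_upwards [eventually_ne_atTop 0] with m hm
  exact abs_address_sub_parent_le hm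

/-! ### The fan attached to a family of ratios -/

/-- The height of the leg with address `address m`. It is `1` at the root; the height of the
child `n + 2 ^ j` of `n` is the height of `n` times `s n i`, where `i` is the first coordinate
of the pair coded by `j`, so that every ratio `s n i` is used by infinitely many children
of `n`. -/
def height (s : ℕ → ℕ → ℝ) (m : ℕ) : ℝ :=
  if _h : m = 0 then 1
  else height s (parent m) * s (parent m) (Nat.unpair (Nat.log 2 m)).1
termination_by m
decreasing_by exact parent_lt ‹_›

/-- The top of the `m`-th leg. -/
def tip (s : ℕ → ℕ → ℝ) (m : ℕ) : ℝ × ℝ := (height s m * address m, height s m)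

/-- The `m`-th leg: the segment from the vertex to the `m`-th tip. -/
def leg (s : ℕ → ℕ → ℝ) (m : ℕ) : Set (ℝ × ℝ) := segment ℝ fanVertex (tip s m)

/-- The union of all legs. -/
def treeFan (s : ℕ → ℕ → ℝ) : Set (ℝ × ℝ) := ⋃ m, leg s m

/-- The ratios at `n` are positive and at most `1 / (n + 2)`. -/
def SmallRatios (s : ℕ → ℕ → ℝ) : Prop := ∀ n i, 0 < s n i ∧ s n i ≤ 1 / ((n : ℝ) + 2)

section Fan

variable {s : ℕ → ℕ → ℝ}

lemma height_zero : height s 0 = 1 := by rw [height]; simp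

lemma height_of_ne {m : ℕ} (hm : m ≠ 0) :
    height s m = height s (parent m) * s (parent m) (Nat.unpair (Nat.log 2 m)).1 := by
  rw [height]; simp [hm]

lemma height_child {n j : ℕ} (h : n < 2 ^ j) :
    height s (n + 2 ^ j) = height s n * s n (Nat.unpair j).1 := by
  rw [height_of_ne (by omega), parent_child h, log_child h]

lemma SmallRatios.le_half (hs : SmallRatios s) (n i : ℕ) : s n i ≤ 1 / 2 := by
  refine (hs n i).2.trans ?_
  gcongr
  linarith [Nat.cast_nonneg (α := ℝ) n]

lemma height_pos_le_one (hs : SmallRatios s) (m : ℕ) : 0 < height s m ∧ height s m ≤ 1 := by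
  induction m using Nat.strong_induction_on with
  | _ m ih =>
    by_cases hm : m = 0
    · subst hm; rw [height_zero]; norm_num
    · obtain ⟨h1, h2⟩ := ih _ (parent_lt hm)
      rw [height_of_ne hm]
      have h3 := (hs (parent m) (Nat.unpair (Nat.log 2 m)).1).1
      have h4 := hs.le_half (parent m) (Nat.unpair (Nat.log 2 m)).1
      exact ⟨mul_pos h1 h3, by nlinarith⟩

lemma height_pos (hs : SmallRatios s) (m : ℕ) : 0 < height s m := (height_pos_le_one hs m).1

lemma height_le_half_parent (hs : SmallRatios s) {m : ℕ} (hm : m ≠ 0) :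
    height s m ≤ height s (parent m) / 2 := by
  rw [height_of_ne hm]
  have h1 := height_pos hs (parent m)
  have h4 := hs.le_half (parent m) (Nat.unpair (Nat.log 2 m)).1
  nlinarith

lemma height_le_inv_parent (hs : SmallRatios s) {m : ℕ} (hm : m ≠ 0) :
    height s m ≤ 1 / ((parent m : ℝ) + 2) := by
  rw [height_of_ne hm]
  have h1 := height_pos_le_one hs (parent m)
  have h4 := hs (parent m) (Nat.unpair (Nat.log 2 m)).1
  nlinarith

lemma mem_leg (hs : SmallRatios s) {m : ℕ} {q : ℝ × ℝ} :
    q ∈ leg s m ↔ q.1 = q.2 * address m ∧ 0 ≤ q.2 ∧ q.2 ≤ height s m := by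
  have hp := height_pos hs m
  rw [leg, segment_eq_image]
  constructor
  · rintro ⟨t, ⟨h0, h1⟩, rfl⟩
    simp only [fanVertex, tip, Prod.smul_mk, smul_eq_mul, mul_zero, Prod.mk_add_mk, zero_add]
    exact ⟨by ring, by positivity, by nlinarith⟩
  · rintro ⟨h1, h2, h3⟩
    refine ⟨q.2 / height s m, ⟨by positivity, (div_le_one hp).2 h3⟩, ?_⟩
    ext
    · simp only [fanVertex, tip, Prod.smul_mk, smul_eq_mul, mul_zero, Prod.mk_add_mk, zero_add, h1]
      field_simp
    · simp only [fanVertex, tip, Prod.smul_mk, smul_eq_mul, mul_zero, Prod.mk_add_mk, zero_add]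
      field_simp

lemma mem_treeFan (hs : SmallRatios s) {q : ℝ × ℝ} :
    q ∈ treeFan s ↔ ∃ m, q.1 = q.2 * address m ∧ 0 ≤ q.2 ∧ q.2 ≤ height s m := by
  simp only [treeFan, mem_iUnion, mem_leg hs]

lemma tip_mem_leg (hs : SmallRatios s) (m : ℕ) : tip s m ∈ leg s m :=
  (mem_leg hs).2 ⟨rfl, (height_pos hs m).le, le_rfl⟩

lemma vertex_mem_leg (m : ℕ) : fanVertex ∈ leg s m := left_mem_segment _ _ _

lemma tip_mem (hs : SmallRatios s) (m : ℕ) : tip s m ∈ treeFan s :=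
  mem_iUnion.2 ⟨m, tip_mem_leg hs m⟩

/-- Distinct legs meet only in the vertex. -/
lemma eq_of_mem_leg (hs : SmallRatios s) {m n : ℕ} {q : ℝ × ℝ} (hm : q ∈ leg s m)
    (hn : q ∈ leg s n) (hq : q.2 ≠ 0) : m = n := by
  rw [mem_leg hs] at hm hn
  exact address_injective (mul_left_cancel₀ hq (hm.1.symm.trans hn.1))

lemma tip_injective (hs : SmallRatios s) : Function.Injective (tip s) := fun m n h =>
  eq_of_mem_leg hs (tip_mem_leg hs m) (h ▸ tip_mem_leg hs n) (height_pos hs m).ne'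

open Filter in
/-- A limit `x`, at positive height, of points `q` on legs with indices `m q` lies on the ray
through some address `address n`. The legs used are either the `n`-th leg itself or children
of `n` with indices tending to infinity: legs with large parents are too short to reach `x`,
so along an ultrafilter the parent is constant. -/
lemma limit_cases (hs : SmallRatios s) {x : ℝ × ℝ} {U : Ultrafilter (ℝ × ℝ)} (hU : ↑U ≤ 𝓝 x)
    {m : ℝ × ℝ → ℕ} (hm : ∀ᶠ q in (U : Filter (ℝ × ℝ)), q ∈ leg s (m q)) (hx : 0 < x.2) :
    ∃ n, x.1 = x.2 * address n ∧ ((∀ᶠ q in (U : Filter (ℝ × ℝ)), m q = n) ∨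
      ((∀ᶠ q in (U : Filter (ℝ × ℝ)), m q ≠ 0 ∧ parent (m q) = n) ∧ Tendsto m U atTop)) := by
  have ht1 : Tendsto Prod.fst (U : Filter (ℝ × ℝ)) (𝓝 x.1) := continuous_fst.continuousAt.mono_left hU
  have ht2 : Tendsto Prod.snd (U : Filter (ℝ × ℝ)) (𝓝 x.2) := continuous_snd.continuousAt.mono_left hU
  have hlim : ∀ n, Tendsto (fun q => address (m q)) U (𝓝 (address n)) → x.1 = x.2 * address n := by
    intro n hn
    refine tendsto_nhds_unique ht1 ((ht2.mul hn).congr' ?_)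
    filter_upwards [hm] with q hq
    exact ((mem_leg hs).1 hq).1.symm
  have hconst : (∃ n, ∀ᶠ q in (U : Filter (ℝ × ℝ)), m q = n) → ∃ n, x.1 = x.2 * address n ∧
      ((∀ᶠ q in (U : Filter (ℝ × ℝ)), m q = n) ∨
      ((∀ᶠ q in (U : Filter (ℝ × ℝ)), m q ≠ 0 ∧ parent (m q) = n) ∧ Tendsto m U atTop)) := by
    rintro ⟨n, hn⟩
    refine ⟨n, hlim n (tendsto_const_nhds.congr' ?_), Or.inl hn⟩
    filter_upwards [hn] with q hq
    rw [hq]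
  by_cases hc : ∃ n, ∀ᶠ q in (U : Filter (ℝ × ℝ)), m q = n
  · exact hconst hc
  have hbdd : ∀ f : ℝ × ℝ → ℕ, ∀ N, (∀ᶠ q in (U : Filter (ℝ × ℝ)), f q < N) →
      ∃ n, ∀ᶠ q in (U : Filter (ℝ × ℝ)), f q = n := by
    intro f N hN
    have h : ∀ᶠ q in (U : Filter (ℝ × ℝ)), ∃ n ∈ Set.Iio N, f q = n := by
      filter_upwards [hN] with q hq
      exact ⟨_, hq, rfl⟩
    obtain ⟨n, -, hn⟩ := (Ultrafilter.eventually_exists_mem_iff (Set.finite_Iio N)).1 h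
    exact ⟨n, hn⟩
  have hne : ∀ᶠ q in (U : Filter (ℝ × ℝ)), m q ≠ 0 :=
    Ultrafilter.eventually_not.2 fun h => hc ⟨0, h⟩
  obtain ⟨N, hN⟩ := exists_nat_gt (2 / x.2)
  obtain ⟨n, hn⟩ : ∃ n, ∀ᶠ q in (U : Filter (ℝ × ℝ)), parent (m q) = n := by
    refine hbdd _ N ?_
    filter_upwards [hm, hne, ht2.eventually (lt_mem_nhds (half_lt_self hx))] with q h1 h2 h3
    have h4 := h3.trans_le (((mem_leg hs).1 h1).2.2.trans (height_le_inv_parent hs h2))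
    rw [lt_div_iff₀ (by positivity)] at h4
    rw [div_lt_iff₀ hx] at hN
    by_contra! hcon
    have h5 : (N : ℝ) ≤ (parent (m q) : ℝ) := by exact_mod_cast hcon
    nlinarith
  have htop : Tendsto m U atTop := by
    refine tendsto_atTop.2 fun b => ?_
    have h : ∀ᶠ q in (U : Filter (ℝ × ℝ)), ¬ m q < b :=
      Ultrafilter.eventually_not.2 fun h => hc (hbdd m b h)
    filter_upwards [h] with q hq
    exact not_lt.1 hq
  refine ⟨n, hlim n ?_, Or.inr ⟨hne.and hn, htop⟩⟩
  have h := (tendsto_address_sub_parent.comp htop).add_const (address n)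
  rw [zero_add] at h
  refine h.congr' ?_
  filter_upwards [hn] with q hq
  simp [hq]

lemma exists_index (s : ℕ → ℕ → ℝ) : ∃ m : ℝ × ℝ → ℕ, ∀ q ∈ treeFan s, q ∈ leg s (m q) := by
  have h : ∀ q : ℝ × ℝ, ∃ m, q ∈ treeFan s → q ∈ leg s m := fun q => by
    by_cases hq : q ∈ treeFan s
    · exact (mem_iUnion.1 hq).imp fun m hm _ => hm
    · exact ⟨0, fun h => absurd h hq⟩
  choose m hm using h
  exact ⟨m, hm⟩

lemma treeFan_bounds (hs : SmallRatios s) {q : ℝ × ℝ} (hq : q ∈ treeFan s) :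
    0 ≤ q.1 ∧ q.1 ≤ q.2 ∧ 0 ≤ q.2 ∧ q.2 ≤ 1 := by
  obtain ⟨m, h1, h2, h3⟩ := (mem_treeFan hs).1 hq
  have := address_nonneg m
  have := address_le_one m
  exact ⟨by rw [h1]; positivity, by nlinarith, h2, h3.trans (height_pos_le_one hs m).2⟩

open Filter in
lemma isClosed_treeFan (hs : SmallRatios s) : IsClosed (treeFan s) := by
  obtain ⟨m, hm⟩ := exists_index s
  refine isClosed_of_closure_subset fun x hx => ?_
  have hb : x ∈ {q : ℝ × ℝ | 0 ≤ q.1 ∧ q.1 ≤ q.2 ∧ 0 ≤ q.2} := by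
    refine closure_minimal (fun q hq => ?_) ?_ hx
    · exact ⟨(treeFan_bounds hs hq).1, (treeFan_bounds hs hq).2.1, (treeFan_bounds hs hq).2.2.1⟩
    · exact (isClosed_le continuous_const continuous_fst).inter
        ((isClosed_le continuous_fst continuous_snd).inter
          (isClosed_le continuous_const continuous_snd))
  obtain ⟨hb1, hb2, hb3⟩ := hb
  rcases hb3.eq_or_lt with h0 | hpos
  · have : x = fanVertex := Prod.ext (le_antisymm (hb2.trans h0.symm.le) hb1) h0.symm
    rw [this]
    exact mem_iUnion.2 ⟨0, vertex_mem_leg 0⟩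
  obtain ⟨U, hXU, hU⟩ := mem_closure_iff_ultrafilter.1 hx
  have hmU : ∀ᶠ q in (U : Filter (ℝ × ℝ)), q ∈ leg s (m q) := by
    filter_upwards [hXU] with q hq using hm q hq
  have ht2 : Tendsto Prod.snd (U : Filter (ℝ × ℝ)) (𝓝 x.2) := continuous_snd.continuousAt.mono_left hU
  obtain ⟨n, hn, hcase⟩ := limit_cases hs hU hmU hpos
  refine (mem_treeFan hs).2 ⟨n, hn, hb3, le_of_tendsto ht2 ?_⟩
  rcases hcase with h | ⟨h, -⟩
  · filter_upwards [h, hmU] with q h1 h2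
    rw [← h1]; exact ((mem_leg hs).1 h2).2.2
  · filter_upwards [h, hmU] with q h1 h2
    have h3 := height_le_half_parent hs h1.1
    have h4 := height_pos hs n
    rw [h1.2] at h3
    have := ((mem_leg hs).1 h2).2.2
    linarith

lemma isCompact_treeFan (hs : SmallRatios s) : IsCompact (treeFan s) := by
  refine IsCompact.of_isClosed_subset (isCompact_Icc (a := ((0, 0) : ℝ × ℝ)) (b := (1, 1)))
    (isClosed_treeFan hs) fun q hq => ?_
  obtain ⟨h1, h2, h3, h4⟩ := treeFan_bounds hs hq
  exact ⟨⟨h1, h3⟩, ⟨h2.trans h4, h4⟩⟩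

open Filter in
/-- Near a tip the fan coincides with the leg of that tip: children of `n` are at most half as
high as `n`. -/
lemma leg_mem_nhdsWithin_tip (hs : SmallRatios s) (n : ℕ) :
    ∀ᶠ q in 𝓝[treeFan s] (tip s n), q ∈ leg s n := by
  obtain ⟨m, hm⟩ := exists_index s
  by_contra hcon
  have hcl : tip s n ∈ closure (treeFan s \ leg s n) := by
    rw [mem_closure_iff_frequently]
    have h := Filter.not_eventually.1 hcon
    rw [frequently_nhdsWithin_iff] at h
    exact h.mono fun q hq => ⟨hq.2, hq.1⟩
  obtain ⟨U, hXU, hU⟩ := mem_closure_iff_ultrafilter.1 hcl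
  have hmU : ∀ᶠ q in (U : Filter (ℝ × ℝ)), q ∈ leg s (m q) := by
    filter_upwards [hXU] with q hq using hm q hq.1
  have ht2 : Tendsto Prod.snd (U : Filter (ℝ × ℝ)) (𝓝 (height s n)) :=
    continuous_snd.continuousAt.mono_left hU
  have hpos := height_pos hs n
  obtain ⟨k, hk, hcase⟩ := limit_cases hs hU hmU hpos
  obtain rfl : n = k := address_injective (mul_left_cancel₀ hpos.ne' hk)
  have hfalse : ∀ᶠ q in (U : Filter (ℝ × ℝ)), False := by
    rcases hcase with h | ⟨h, -⟩
    · filter_upwards [h, hmU, hXU] with q h1 h2 h3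
      exact h3.2 (h1 ▸ h2)
    · filter_upwards [h, hmU, ht2.eventually (lt_mem_nhds (half_lt_self hpos))] with q h1 h2 h3
      have h4 := height_le_half_parent hs h1.1
      rw [h1.2] at h4
      have := ((mem_leg hs).1 h2).2.2
      linarith
  exact hfalse.exists.elim fun _ h => h

/-! ### Endpoints of the fan -/

lemma isArc_segment {a b : ℝ × ℝ} (hab : a ≠ b) : IsArc (segment ℝ a b) a b := by
  let f : Set.Icc (0:ℝ) 1 → ℝ × ℝ := fun t => AffineMap.lineMap a b (t : ℝ)
  have hf : Continuous f := AffineMap.lineMap_continuous.comp continuous_subtype_val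
  have hinj : Function.Injective f := fun t u h =>
    Subtype.ext (AffineMap.lineMap_injective ℝ hab h)
  have hr : Set.range f = segment ℝ a b := by
    rw [segment_eq_image_lineMap, Set.image_eq_range]
  rw [← hr]
  refine ⟨(hf.isClosedEmbedding hinj).isEmbedding.toHomeomorph, ?_, ?_⟩
  · exact AffineMap.lineMap_apply_zero a b
  · exact AffineMap.lineMap_apply_one a b

/-- Two segments that issue from `x` into `X` and meet only in `x` show that `x` has order at
least `2`. -/
lemma orderAtLeast_two_of_segments {X : Set (ℝ × ℝ)} {x a b : ℝ × ℝ} (ha : x ≠ a) (hb : x ≠ b)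
    (hA : segment ℝ x a ⊆ X) (hB : segment ℝ x b ⊆ X)
    (hAB : segment ℝ x a ∩ segment ℝ x b ⊆ {x}) : OrderAtLeast X x 2 := by
  have hAB' : segment ℝ x a ∩ segment ℝ x b = {x} :=
    hAB.antisymm (singleton_subset_iff.2 ⟨left_mem_segment _ _ _, left_mem_segment _ _ _⟩)
  refine ⟨![segment ℝ x a, segment ℝ x b], ?_, ?_, ?_⟩
  · intro i; fin_cases i
    · exact hA
    · exact hB
  · intro i; fin_cases i
    · exact ⟨a, isArc_segment ha⟩
    · exact ⟨b, isArc_segment hb⟩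
  · intro i j hij
    fin_cases i <;> fin_cases j
    · exact absurd rfl hij
    · exact hAB'
    · change segment ℝ x b ∩ segment ℝ x a = {x}
      rw [inter_comm]; exact hAB'
    · exact absurd rfl hij

lemma orderAtLeast_vertex (hs : SmallRatios s) : OrderAtLeast (treeFan s) fanVertex 2 := by
  have hne : ∀ m, fanVertex ≠ tip s m := fun m h =>
    (height_pos hs m).ne (congrArg Prod.snd h)
  refine orderAtLeast_two_of_segments (hne 0) (hne 1) (subset_iUnion (leg s) 0)
    (subset_iUnion (leg s) 1) ?_
  rintro q ⟨h0, h1⟩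
  by_contra hq
  have hq2 : q.2 ≠ 0 := by
    intro h
    have h' := ((mem_leg hs).1 h0).1
    rw [h, zero_mul] at h'
    exact hq (Prod.ext h' h)
  exact absurd (eq_of_mem_leg hs h0 h1 hq2) (by norm_num)

/-- A point strictly inside a leg splits it into two arcs. -/
lemma orderAtLeast_interior (hs : SmallRatios s) {m : ℕ} {x : ℝ × ℝ} (hx : x ∈ leg s m)
    (h0 : x ≠ fanVertex) (h1 : x ≠ tip s m) : OrderAtLeast (treeFan s) x 2 := by
  have hsub : ∀ y ∈ leg s m, segment ℝ x y ⊆ treeFan s := fun y hy =>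
    ((convex_segment _ _).segment_subset hx hy).trans (subset_iUnion (leg s) m)
  have hxm := (mem_leg hs).1 hx
  refine orderAtLeast_two_of_segments h1 h0 (hsub _ (tip_mem_leg hs m))
    (hsub _ (vertex_mem_leg m)) ?_
  rintro q ⟨hq1, hq2⟩
  have hq := (mem_leg hs).1 ((convex_segment _ _).segment_subset hx (vertex_mem_leg m) hq2)
  -- heights on the two segments lie on opposite sides of the height of `x`
  have hge : x.2 ≤ q.2 := by
    have h : segment ℝ x (tip s m) ⊆ {q | x.2 ≤ q.2} :=
      (convex_halfSpace_ge (LinearMap.snd ℝ ℝ ℝ).isLinear x.2).segment_subset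
        (le_refl x.2) hxm.2.2
    exact h hq1
  have hle : q.2 ≤ x.2 := by
    have h : segment ℝ x fanVertex ⊆ {q | q.2 ≤ x.2} :=
      (convex_halfSpace_le (LinearMap.snd ℝ ℝ ℝ).isLinear x.2).segment_subset
        (le_refl x.2) hxm.2.1
    exact h hq2
  have h2 : q.2 = x.2 := le_antisymm hle hge
  exact Prod.ext (by rw [hq.1, hxm.1, h2]) h2

/-- Any arc of the fan that starts at a tip contains an initial piece of the leg below that
tip. -/
lemma arc_at_tip (hs : SmallRatios s) {n : ℕ} {A : Set (ℝ × ℝ)} {b : ℝ × ℝ}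
    (hA : A ⊆ treeFan s) (harc : IsArc A (tip s n) b) :
    ∃ u < height s n, ∀ q ∈ leg s n, u ≤ q.2 → q ∈ A := by
  obtain ⟨h, h0, -⟩ := harc
  let f : ℝ → ℝ × ℝ := fun t => (h (Set.projIcc 0 1 zero_le_one t) : ℝ × ℝ)
  have hf : Continuous f := continuous_subtype_val.comp (h.continuous.comp continuous_projIcc)
  have hfA : ∀ t, f t ∈ A := fun t => (h _).2
  have hf0 : f 0 = tip s n := by
    rw [← h0]
    simp only [f, Set.projIcc_left]
  have hev : ∀ᶠ t in 𝓝 (0:ℝ), f t ∈ leg s n := by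
    have h1 : Filter.Tendsto f (𝓝 0) (𝓝[treeFan s] (tip s n)) :=
      tendsto_nhdsWithin_iff.2 ⟨hf0 ▸ hf.tendsto 0, Filter.Eventually.of_forall fun t => hA (hfA t)⟩
    exact h1.eventually (leg_mem_nhdsWithin_tip hs n)
  obtain ⟨ε, hε, hball⟩ := Metric.eventually_nhds_iff.1 hev
  set δ : ℝ := min (ε / 2) 1 with hδ
  have hδ0 : 0 < δ := lt_min (by positivity) one_pos
  have hδ1 : δ ≤ 1 := min_le_right _ _
  have hδε : δ < ε := (min_le_left _ _).trans_lt (by linarith)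
  have hleg : ∀ t ∈ Set.Icc 0 δ, f t ∈ leg s n := fun t ht => by
    apply hball
    rw [Real.dist_eq, sub_zero, abs_of_nonneg ht.1]
    exact ht.2.trans_lt hδε
  have hlegδ := (mem_leg hs).1 (hleg δ ⟨hδ0.le, le_rfl⟩)
  refine ⟨(f δ).2, lt_of_le_of_ne hlegδ.2.2 fun heq => ?_, ?_⟩
  · have h1 : f δ = f 0 := by
      rw [hf0]
      exact Prod.ext (by rw [hlegδ.1, heq]; rfl) heq
    have h2 := h.injective (Subtype.ext h1)
    rw [Set.projIcc_of_mem zero_le_one ⟨hδ0.le, hδ1⟩, Set.projIcc_left] at h2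
    exact hδ0.ne' (congrArg Subtype.val h2)
  · intro q hq huq
    have hqm := (mem_leg hs).1 hq
    have hivt := intermediate_value_Icc' hδ0.le (continuous_snd.comp hf).continuousOn
    have hmem : q.2 ∈ Set.Icc ((Prod.snd ∘ f) δ) ((Prod.snd ∘ f) 0) := by
      refine ⟨huq, ?_⟩
      simp only [Function.comp, hf0]
      exact hqm.2.2
    obtain ⟨t, ht, hteq⟩ := hivt hmem
    have htm := (mem_leg hs).1 (hleg t ht)
    have : q = f t := Prod.ext (by rw [hqm.1, htm.1]; rw [← hteq]; rfl) hteq.symm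
    rw [this]
    exact hfA t

lemma tip_mem_endpoints (hs : SmallRatios s) (n : ℕ) : tip s n ∈ Endpoints (treeFan s) := by
  have hpos := height_pos hs n
  refine ⟨tip_mem hs n, ?_, ?_⟩
  · refine ⟨fun _ => segment ℝ (tip s n) fanVertex, fun _ => ?_, fun _ => ⟨fanVertex, ?_⟩, ?_⟩
    · rw [segment_symm]; exact subset_iUnion (leg s) n
    · exact isArc_segment fun h => hpos.ne' (congrArg Prod.snd h)
    · intro i j hij
      exact absurd (Subsingleton.elim i j) hij
  · rintro ⟨A, hA, harc, hdisj⟩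
    obtain ⟨b0, h0⟩ := harc 0
    obtain ⟨b1, h1⟩ := harc 1
    obtain ⟨u, hu, hu'⟩ := arc_at_tip hs (hA 0) h0
    obtain ⟨v, hv, hv'⟩ := arc_at_tip hs (hA 1) h1
    -- both arcs contain the point of the leg at height `w`
    set w := max (max u v) 0 with hw
    have hwlt : w < height s n := max_lt (max_lt hu hv) hpos
    have hq : ((w * address n, w) : ℝ × ℝ) ∈ leg s n :=
      (mem_leg hs).2 ⟨rfl, le_max_right _ _, hwlt.le⟩
    have hmem : ((w * address n, w) : ℝ × ℝ) ∈ A 0 ∩ A 1 :=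
      ⟨hu' _ hq ((le_max_left u v).trans (le_max_left _ _)),
        hv' _ hq ((le_max_right u v).trans (le_max_left _ _))⟩
    rw [hdisj 0 1 (by decide)] at hmem
    exact hwlt.ne (congrArg Prod.snd hmem)

lemma endpoints_treeFan (hs : SmallRatios s) : Endpoints (treeFan s) = Set.range (tip s) := by
  ext x
  constructor
  · rintro ⟨hx, -, h2⟩
    obtain ⟨m, hm⟩ := mem_iUnion.1 hx
    by_contra hr
    by_cases h0 : x = fanVertex
    · exact h2 (h0 ▸ orderAtLeast_vertex hs)
    · exact h2 (orderAtLeast_interior hs hm h0 fun h => hr ⟨m, h.symm⟩)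
  · rintro ⟨n, rfl⟩
    exact tip_mem_endpoints hs n

lemma isSmoothFan_treeFan (hs : SmallRatios s) : IsSmoothFan (treeFan s) where
  subset_fan := by
    intro q hq
    obtain ⟨m, h1, h2, h3⟩ := (mem_treeFan hs).1 hq
    exact ⟨address m, address_mem m, q.2, ⟨h2, h3.trans (height_pos_le_one hs m).2⟩,
      Prod.ext h1 rfl⟩
  isCompact := isCompact_treeFan hs
  isConnected := ⟨⟨_, tip_mem hs 0⟩, isPreconnected_iUnion
    ⟨fanVertex, mem_iInter.2 fun m => vertex_mem_leg m⟩
    fun m => (convex_segment _ _).isPreconnected⟩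
  nondegenerate := ⟨_, tip_mem hs 0, _, tip_mem hs 1, fun h =>
    absurd (tip_injective hs h) (by norm_num)⟩
  vertex_mem := mem_iUnion.2 ⟨0, vertex_mem_leg 0⟩
  vertex_order := orderAtLeast_vertex hs

lemma discreteTopology_range_tip (hs : SmallRatios s) :
    DiscreteTopology (Set.range (tip s)) := by
  rw [discreteTopology_subtype_iff]
  rintro _ ⟨n, rfl⟩
  have h : ∀ᶠ q in 𝓝[≠] (tip s n) ⊓ Filter.principal (Set.range (tip s)), False := by
    rw [← nhdsWithin_inter']
    have hsub : ({tip s n}ᶜ ∩ Set.range (tip s)) ⊆ treeFan s := by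
      rintro _ ⟨-, m, rfl⟩
      exact tip_mem hs m
    have := nhdsWithin_mono _ hsub (leg_mem_nhdsWithin_tip hs n)
    filter_upwards [this, self_mem_nhdsWithin] with q h1 h2
    obtain ⟨h2, m, rfl⟩ := h2
    exact h2 (congrArg (tip s) (eq_of_mem_leg hs (tip_mem_leg hs m) h1 (height_pos hs m).ne'))
  exact Filter.eventually_false_iff_eq_bot.1 h

/-! ### Traces of the endpoint set on the legs -/

open Filter in
/-- The tips of children of `n` accumulate at each ratio `s n i` on the leg of `n`. -/
lemma ratio_point_mem_closure (n i : ℕ) :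
    ((height s n * s n i * address n, height s n * s n i) : ℝ × ℝ) ∈
      closure (Set.range (tip s)) := by
  have hpair : Tendsto (fun k => Nat.pair i k) atTop atTop :=
    tendsto_atTop_mono (fun k => Nat.right_le_pair i k) tendsto_id
  have hbig : ∀ᶠ k in atTop, n < 2 ^ Nat.pair i k := by
    filter_upwards [hpair.eventually_ge_atTop n] with k hk
    exact hk.trans_lt Nat.lt_two_pow_self
  have haddr : Tendsto (fun k => address (n + 2 ^ Nat.pair i k)) atTop (𝓝 (address n)) := by
    have h1 : Tendsto (fun k => n + 2 ^ Nat.pair i k) atTop atTop :=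
      tendsto_atTop_mono (fun k => by
        have := Nat.lt_two_pow_self (n := Nat.pair i k); omega) hpair
    have h2 := (tendsto_address_sub_parent.comp h1).add_const (address n)
    rw [zero_add] at h2
    refine h2.congr' ?_
    filter_upwards [hbig] with k hk
    simp [parent_child hk]
  refine mem_closure_of_tendsto
    (((haddr.const_mul (height s n * s n i))).prodMk_nhds tendsto_const_nhds)
    (f := fun k => ((height s n * s n i) * address (n + 2 ^ Nat.pair i k), height s n * s n i)) ?_
  filter_upwards [hbig] with k hk
  refine ⟨n + 2 ^ Nat.pair i k, ?_⟩
  simp [tip, height_child hk]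

open Filter in
/-- The trace of the closure of the set of tips on the leg of `n` is the closure of the set of
ratios at `n`. -/
lemma legTrace_tips (hs : SmallRatios s) {n : ℕ} {L : Set ℝ} (hL : closure (Set.range (s n)) = L)
    (hL0 : L ⊆ Set.Ioo 0 1) : legTrace (Set.range (tip s)) (tip s n) = L := by
  have hpos := height_pos hs n
  ext t
  constructor
  · rintro ⟨x, ⟨⟨hx, hxleg⟩, hxne⟩, rfl⟩
    have hxl := (mem_leg hs).1 hxleg
    have hx0 : 0 < x.2 := by
      refine lt_of_le_of_ne hxl.2.1 fun h => hxne (Or.inl ?_)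
      refine Prod.ext ?_ h.symm
      rw [hxl.1, ← h, zero_mul]; rfl
    obtain ⟨U, hEU, hU⟩ := mem_closure_iff_ultrafilter.1 hx
    obtain ⟨m, hm⟩ : ∃ m : ℝ × ℝ → ℕ, ∀ q ∈ Set.range (tip s), tip s (m q) = q := by
      have h : ∀ q : ℝ × ℝ, ∃ m, q ∈ Set.range (tip s) → tip s m = q := fun q => by
        by_cases hq : q ∈ Set.range (tip s)
        · exact hq.imp fun m hm _ => hm
        · exact ⟨0, fun h => absurd h hq⟩
      choose m hm using h
      exact ⟨m, hm⟩
    have hmU : ∀ᶠ q in (U : Filter (ℝ × ℝ)), tip s (m q) = q := by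
      filter_upwards [hEU] with q hq using hm q hq
    have ht2 : Tendsto Prod.snd (U : Filter (ℝ × ℝ)) (𝓝 x.2) :=
      continuous_snd.continuousAt.mono_left hU
    obtain ⟨k, hk, hcase⟩ := limit_cases hs hU (m := m) (by
      filter_upwards [hmU] with q hq
      have := tip_mem_leg hs (m q)
      rwa [hq] at this) hx0
    obtain rfl : n = k := address_injective (mul_left_cancel₀ hx0.ne' (hxl.1.symm.trans hk))
    rcases hcase with h | ⟨h, -⟩
    · -- the tips are eventually `tip s n`, so that `x` is the excluded endpoint
      exfalso
      refine hxne (Or.inr ?_)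
      have h2 : x.2 = height s n := by
        refine tendsto_nhds_unique ht2 (tendsto_const_nhds.congr' ?_)
        filter_upwards [h, hmU] with q h1 h2
        rw [← h2, h1]; rfl
      exact Prod.ext (by rw [hxl.1, h2]; rfl) h2
    · rw [← hL]
      refine mem_closure_of_tendsto (ht2.div_const (height s n)) ?_
      filter_upwards [h, hmU] with q h1 h2
      refine ⟨(Nat.unpair (Nat.log 2 (m q))).1, ?_⟩
      have h3 : q.2 = height s (m q) := by
        conv_lhs => rw [← h2]
        rfl
      rw [h3, height_of_ne h1.1, h1.2]
      field_simp
  · intro ht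
    obtain ⟨ht0, ht1⟩ := hL0 ht
    refine ⟨(height s n * t * address n, height s n * t), ⟨⟨?_, ?_⟩, ?_⟩, ?_⟩
    · rw [← hL] at ht
      have hc : Continuous fun t : ℝ => ((height s n * t * address n, height s n * t) : ℝ × ℝ) := by
        fun_prop
      have := map_mem_closure hc ht (t := closure (Set.range (tip s))) (by
        rintro _ ⟨i, rfl⟩
        exact ratio_point_mem_closure n i)
      rwa [closure_closure] at this
    · exact (mem_leg hs).2 ⟨rfl, by positivity, by simp only; nlinarith⟩
    · rintro (h | h)
      · have h' : height s n * t = 0 := congrArg Prod.snd h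
        have : 0 < height s n * t := by positivity
        linarith
      · have h' : height s n * t = height s n := congrArg Prod.snd h
        nlinarith
    · simp only [tip]
      field_simp

end Fan

/-! ### Squeezing compact sets towards zero -/

/-- A nonempty compact subset of `(0,1)` is order isomorphic to one with arbitrarily small supremum:
apply a large power map. -/
lemma exists_squeezed {K : Set ℝ} (hK : IsCompact K) (hK01 : K ⊆ Set.Ioo 0 1)
    (hne : K.Nonempty) {ε : ℝ} (hε : 0 < ε) :
    ∃ L : Set ℝ, IsCompact L ∧ L.Nonempty ∧ L ⊆ Set.Ioo 0 1 ∧ (∀ x ∈ L, x ≤ ε) ∧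
      OrderIsomorphic L K := by
  obtain ⟨b, hb, hmax⟩ := hK.exists_isGreatest hne
  obtain ⟨p, hp⟩ := exists_pow_lt_of_lt_one hε (hK01 hb).2
  -- the exponent `p + 1` avoids the degenerate power map for `p = 0`
  have hp' : b ^ (p + 1) ≤ ε := by
    rw [pow_succ]
    have h1 := (hK01 hb).1
    have h2 := (hK01 hb).2
    have h3 : 0 < b ^ p := pow_pos h1 p
    nlinarith
  let f : Set.Icc (0:ℝ) 1 → Set.Icc (0:ℝ) 1 := fun t =>
    ⟨(t : ℝ) ^ (p + 1), pow_nonneg t.2.1 _, pow_le_one₀ t.2.1 t.2.2⟩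
  have hmono : StrictMono f := fun t u h =>
    Subtype.mk_lt_mk.2 (pow_lt_pow_left₀ h t.2.1 (Nat.succ_ne_zero p))
  have hsurj : Function.Surjective f := by
    intro y
    have h := intermediate_value_Icc (zero_le_one (α := ℝ))
      (continuous_pow (M := ℝ) (p + 1)).continuousOn
    obtain ⟨x, hx, hxy⟩ := h (show (y : ℝ) ∈ _ by simp)
    exact ⟨⟨x, hx⟩, Subtype.ext hxy⟩
  let g := (hmono.orderIsoOfSurjective f hsurj).symm
  refine ⟨(fun t => t ^ (p + 1)) '' K, hK.image (continuous_pow _), hne.image _, ?_, ?_,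
    g.toHomeomorph, g.strictMono, ?_⟩
  · rintro _ ⟨t, ht, rfl⟩
    exact ⟨pow_pos (hK01 ht).1 _, pow_lt_one₀ (hK01 ht).1.le (hK01 ht).2 (Nat.succ_ne_zero p)⟩
  · rintro _ ⟨t, ht, rfl⟩
    exact (pow_le_pow_left₀ (hK01 ht).1.le (hmax ht) _).trans hp'
  · have hgf : ∀ t, g (f t) = t := fun t =>
      (hmono.orderIsoOfSurjective f hsurj).symm_apply_apply t
    ext x
    constructor
    · rintro ⟨_, ⟨y, ⟨t, ht, hty⟩, rfl⟩, rfl⟩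
      have hy : y = f ⟨t, Ioo_subset_Icc_self (hK01 ht)⟩ := Subtype.ext hty.symm
      change ((g y : Set.Icc (0:ℝ) 1) : ℝ) ∈ K
      rw [hy, hgf]
      exact ht
    · intro hx
      refine ⟨⟨x, Ioo_subset_Icc_self (hK01 hx)⟩, ⟨f ⟨x, Ioo_subset_Icc_self (hK01 hx)⟩,
        ⟨x, hx, rfl⟩, ?_⟩, rfl⟩
      exact hgf _

/-- A nonempty compact set of reals is the closure of the range of a sequence. -/
lemma exists_seq_closure_eq {L : Set ℝ} (hL : IsCompact L) (hne : L.Nonempty) :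
    ∃ u : ℕ → ℝ, closure (Set.range u) = L := by
  have : Nonempty L := hne.to_subtype
  obtain ⟨v, hv⟩ := TopologicalSpace.exists_dense_seq L
  refine ⟨fun i => (v i : ℝ), ?_⟩
  have h := hL.isClosed.isClosedEmbedding_subtypeVal.closure_image_eq (Set.range v)
  rw [hv.closure_range, image_univ, Subtype.range_coe, ← Set.range_comp] at h
  exact h

/-- If `𝒦 = {K n : n ∈ ω}` is a countably infinite set of nonempty compact
subsets of `(0,1)`, no two of which are order isomorphic, then there is a `𝒦`-fan `X`, with
witnessing set `E_𝒦 = {e n : n ∈ ω}`, such that `E(X)` is homeomorphic to the natural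
numbers (a countably infinite discrete space) and `E(X) = E_𝒦`. -/
theorem exists_kfan_endpoints_nat (K : ℕ → Set ℝ) (hK : KFamily K)
    (hne : ∀ n, (K n).Nonempty) :
    ∃ (X : Set (ℝ × ℝ)) (e : ℕ → ℝ × ℝ), IsKFan K X e ∧
      Nonempty (↥(Endpoints X) ≃ₜ ℕ) ∧ Endpoints X = Set.range e := by
  have hsq : ∀ n : ℕ, ∃ u : ℕ → ℝ, ∃ L : Set ℝ, closure (Set.range u) = L ∧ L ⊆ Set.Ioo 0 1 ∧
      (∀ x ∈ L, x ≤ 1 / ((n : ℝ) + 2)) ∧ OrderIsomorphic L (K n) := by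
    intro n
    obtain ⟨L, h1, h2, h3, h4, h5⟩ := exists_squeezed (hK.1 n).1 (hK.1 n).2 (hne n)
      (ε := 1 / ((n : ℝ) + 2)) (by positivity)
    obtain ⟨u, hu⟩ := exists_seq_closure_eq h1 h2
    exact ⟨u, L, hu, h3, h4, h5⟩
  choose s L hcl hL01 hLsmall hiso using hsq
  have hmem : ∀ n i, s n i ∈ L n := fun n i => hcl n ▸ subset_closure ⟨i, rfl⟩
  have hs : SmallRatios s := fun n i => ⟨(hL01 n (hmem n i)).1, hLsmall n _ (hmem n i)⟩
  have hE := endpoints_treeFan hs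
  refine ⟨treeFan s, tip s, ⟨isSmoothFan_treeFan hs, tip_mem_endpoints hs, fun n => ?_,
    fun x hx => ?_, fun x hx => ?_⟩, ?_, hE⟩
  · rw [hE, legTrace_tips hs (hcl n) (hL01 n)]
    exact hiso n
  · exact absurd (hE ▸ hx.1) hx.2
  · exact absurd (hE ▸ hx.1) hx.2
  · rw [hE]
    have := discreteTopology_range_tip hs
    exact ⟨(Equiv.ofInjective _ (tip_injective hs)).symm.toHomeomorphOfDiscrete⟩

end SmoothFanPaper
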